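/- Let d ≥ 1 and α ∈ (0,1). There exists C > 0 depending only on d and α such that every g : ℝ × ℝ^d × ℝ^d → ℝ which is C¹ in (t,x), C² in v, and has [g]_{C_ℓ^{2+α}} < ∞ satisfies, for every z₀ ∈ ℝ × ℝ^d × ℝ^d, ‖g‖_{L^∞(Q₁(z₀))} + [g]_{C_ℓ^{2+α}(Q₁(z₀))} ≤ C ([∂_t g + v·∇_x g]_{C_ℓ^α(Q₂(z₀))} + Σ_{i,j} [∂²_{v_i v_j} g]_{C_ℓ^α(Q₂(z₀))} + ‖g‖_{L^∞(Q₂(z₀))}). -/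

import Mathlib

open Real MeasureTheory
open scoped BigOperators ENNReal

noncomputable section

abbrev E (d : ℕ) := EuclideanSpace ℝ (Fin d)
abbrev Z (d : ℕ) := ℝ × E d × E d

variable {d : ℕ}

/-- The kinetic cylinder `Q_r(z₀)`. -/
def kCyl (r : ℝ) (z₀ : Z d) : Set (Z d) :=
  {z | z₀.1 - r ^ 2 < z.1 ∧ z.1 ≤ z₀.1 ∧
    ‖z.2.1 - z₀.2.1 - (z.1 - z₀.1) • z₀.2.2‖ < r ^ 3 ∧ ‖z.2.2 - z₀.2.2‖ < r}

/-- Partial derivative in time. -/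
def pt (g : Z d → ℝ) (z : Z d) : ℝ := deriv (fun s => g (s, z.2.1, z.2.2)) z.1

/-- Partial derivative in the direction `x i`. -/
def px (g : Z d → ℝ) (i : Fin d) (z : Z d) : ℝ :=
  deriv (fun s : ℝ => g (z.1, z.2.1 + s • EuclideanSpace.single i (1 : ℝ), z.2.2)) 0

/-- Partial derivative in the direction `v i`. -/
def pv (g : Z d → ℝ) (i : Fin d) (z : Z d) : ℝ :=
  deriv (fun s : ℝ => g (z.1, z.2.1, z.2.2 + s • EuclideanSpace.single i (1 : ℝ))) 0

/-- Second partial derivative in `v i`, `v j`. -/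
def pvv (g : Z d → ℝ) (i j : Fin d) : Z d → ℝ := pv (pv g j) i

/-- Transport derivative `∂_t g + v ⋅ ∇_x g`. -/
def Yop (g : Z d → ℝ) (z : Z d) : ℝ := pt g z + ∑ i, z.2.2 i * px g i z

/-- Euclidean norm of the velocity gradient `∇_v g`. -/
def gradvNorm (g : Z d → ℝ) (z : Z d) : ℝ := Real.sqrt (∑ i, (pv g i z) ^ 2)

/-- (Frobenius) norm of the velocity Hessian `D²_v g`. -/
def hessvNorm (g : Z d → ℝ) (z : Z d) : ℝ := Real.sqrt (∑ i, ∑ j, (pvv g i j z) ^ 2)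

/-- `g` is `C¹` in `(t,x)` and `C²` in `v` on `Q`, with continuous partial derivatives. -/
structure KinReg (g : Z d → ℝ) (Q : Set (Z d)) : Prop where
  cont : ContinuousOn g Q
  dt : ∀ z ∈ Q, DifferentiableAt ℝ (fun s => g (s, z.2.1, z.2.2)) z.1
  dx : ∀ z ∈ Q, ∀ i, DifferentiableAt ℝ
    (fun s : ℝ => g (z.1, z.2.1 + s • EuclideanSpace.single i (1 : ℝ), z.2.2)) 0
  dv : ∀ z ∈ Q, ∀ i, DifferentiableAt ℝ
    (fun s : ℝ => g (z.1, z.2.1, z.2.2 + s • EuclideanSpace.single i (1 : ℝ))) 0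
  dvv : ∀ z ∈ Q, ∀ i j, DifferentiableAt ℝ
    (fun s : ℝ => pv g j (z.1, z.2.1, z.2.2 + s • EuclideanSpace.single i (1 : ℝ))) 0
  ptc : ContinuousOn (pt g) Q
  pxc : ∀ i, ContinuousOn (px g i) Q
  pvc : ∀ i, ContinuousOn (pv g i) Q
  pvvc : ∀ i j, ContinuousOn (pvv g i j) Q

/-- Sup norm (in `ℝ≥0∞`) of `h` over the set `Q`. -/
def supAbs (Q : Set (Z d)) (h : Z d → ℝ) : ℝ≥0∞ := ⨆ z ∈ Q, ENNReal.ofReal |h z|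

/-- Kinetic Hölder seminorm of exponent `β` on `Q`. -/
def kHolder (β : ℝ) (Q : Set (Z d)) (h : Z d → ℝ) : ℝ≥0∞ :=
  ⨆ (z₀ ∈ Q) (r : ℝ) (_ : 0 < r) (_ : kCyl r z₀ ⊆ Q) (z ∈ kCyl r z₀),
    ENNReal.ofReal (|h z - h z₀| / r ^ β)

/-- Polynomial of kinetic degree at most 2. -/
def kpoly (a b : ℝ) (q : Fin d → ℝ) (M : Matrix (Fin d) (Fin d) ℝ) (z : Z d) : ℝ :=
  a + b * z.1 + ∑ i, q i * z.2.2 i + (1 / 2) * ∑ i, ∑ j, M i j * z.2.2 i * z.2.2 j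

/-- Kinetic Hölder seminorm of order `2 + α` on `Q`, by approximation with polynomials of
kinetic degree at most 2. -/
def kSemi2 (α : ℝ) (Q : Set (Z d)) (g : Z d → ℝ) : ℝ≥0∞ :=
  ⨆ (z₀ ∈ Q) (r : ℝ) (_ : 0 < r) (_ : kCyl r z₀ ⊆ Q),
    (⨅ (a : ℝ) (b : ℝ) (q : Fin d → ℝ) (M : Matrix (Fin d) (Fin d) ℝ),
      ⨆ z ∈ kCyl r z₀, ENNReal.ofReal |g z - kpoly a b q M z|)
      / ENNReal.ofReal (r ^ (2 + α))

/-!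
In the velocity variable and along the free transport, Taylor expansion is controlled directly by
the oscillation of the velocity Hessian and of the transport derivative. Regularity in the position
comes from the commutator of these two directions: a loop made of two opposite velocity jumps `±w`
and two opposite transports of duration `s` displaces the position by `s w`. Comparing the loops
with `(s, w)` and `(s / 2, 2 w)` eliminates the velocity gradients, so that the symmetric second
differences of `g` over a displacement of length `r ^ 3` are `O(r ^ (2 + α))`. As
`(2 + α) / 3 < 1`, dyadic rescaling turns this into the same bound for first differences.
-/

open scoped Matrix Topology

section LineDeriv

variable {V F : Type*} [AddCommGroup V] [Module ℝ V] [NormedAddCommGroup F] [NormedSpace ℝ F]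

lemma hasDerivAt_comp_line {f : V → F} {f' : F} {z u : V} {s : ℝ}
    (h : HasLineDerivAt ℝ f f' (z + s • u) u) : HasDerivAt (fun t : ℝ => f (z + t • u)) f' s := by
  have h₀ : HasDerivAt (fun t : ℝ => f (z + s • u + t • u)) f' (s - s) := by
    rw [sub_self]
    exact h
  refine (h₀.comp_sub_const s s).congr_of_eventuallyEq (.of_forall fun t => ?_)
  simp only [add_assoc, ← add_smul, add_sub_cancel]

lemma norm_sub_sub_smul_le_of_hasLineDerivAt {f : V → F} {f' : ℝ → F} {z u : V} {s ε : ℝ} {b : F}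
    (h : ∀ θ ∈ Set.uIcc 0 s, HasLineDerivAt ℝ f (f' θ) (z + θ • u) u)
    (hb : ∀ θ ∈ Set.uIcc 0 s, ‖f' θ - b‖ ≤ ε) :
    ‖f (z + s • u) - f z - s • b‖ ≤ ε * |s| := by
  have key := (convex_uIcc (0 : ℝ) s).norm_image_sub_le_of_norm_hasDerivWithin_le
    (f := fun θ => f (z + θ • u) - θ • b) (f' := fun θ => f' θ - b)
    (fun θ hθ => by
      simpa using ((hasDerivAt_comp_line (h θ hθ)).fun_sub
        ((hasDerivAt_id θ).smul_const b)).hasDerivWithinAt)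
    hb Set.left_mem_uIcc Set.right_mem_uIcc
  simpa [sub_right_comm] using key

lemma norm_sub_taylor_two_le_of_hasLineDerivAt {f f' f'' : V → F} {z u : V} {ε : ℝ} {m : F}
    (h : ∀ θ ∈ Set.Icc (0 : ℝ) 1, HasLineDerivAt ℝ f (f' (z + θ • u)) (z + θ • u) u)
    (h' : ∀ θ ∈ Set.Icc (0 : ℝ) 1, HasLineDerivAt ℝ f' (f'' (z + θ • u)) (z + θ • u) u)
    (hm : ∀ θ ∈ Set.Icc (0 : ℝ) 1, ‖f'' (z + θ • u) - m‖ ≤ ε) :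
    ‖f (z + u) - f z - f' z - (1 / 2 : ℝ) • m‖ ≤ ε := by
  have hε : 0 ≤ ε := (norm_nonneg _).trans (hm 0 (by simp))
  have first_order : ∀ θ ∈ Set.Icc (0 : ℝ) 1, ‖f' (z + θ • u) - f' z - θ • m‖ ≤ ε := by
    intro θ hθ
    have hsub : Set.uIcc 0 θ ⊆ Set.Icc 0 1 := Set.uIcc_subset_Icc (by simp) hθ
    calc ‖f' (z + θ • u) - f' z - θ • m‖ ≤ ε * |θ| :=
          norm_sub_sub_smul_le_of_hasLineDerivAt (fun η hη => h' η (hsub hη))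
            fun η hη => hm η (hsub hη)
      _ ≤ ε := mul_le_of_le_one_right hε (abs_le.2 ⟨by linarith [hθ.1], hθ.2⟩)
  have hderiv : ∀ θ ∈ Set.Icc (0 : ℝ) 1,
      HasDerivAt (fun s : ℝ => f (z + s • u) - s • f' z - (s ^ 2 / 2) • m)
        (f' (z + θ • u) - f' z - θ • m) θ := by
    intro θ hθ
    have hsq : HasDerivAt (fun s : ℝ => s ^ 2 / 2) θ θ := by
      simpa using (hasDerivAt_pow 2 θ).div_const 2
    simpa using ((hasDerivAt_comp_line (h θ hθ)).fun_sub
      ((hasDerivAt_id θ).smul_const (f' z))).fun_sub (hsq.smul_const m)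
  have key := (convex_Icc (0 : ℝ) 1).norm_image_sub_le_of_norm_hasDerivWithin_le
    (fun θ hθ => (hderiv θ hθ).hasDerivWithinAt) first_order
    (Set.left_mem_Icc.2 zero_le_one) (Set.right_mem_Icc.2 zero_le_one)
  convert key using 2
  · simp [sub_right_comm]
  · simp

variable [TopologicalSpace V] [ContinuousAdd V] [ContinuousSMul ℝ V]

lemma hasLineDerivAt_add {f : V → F} {D : V → F} {a : F} {z u v : V}
    (hu : HasLineDerivAt ℝ f a z u) (hv : ∀ᶠ y in 𝓝 z, HasLineDerivAt ℝ f (D y) y v)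
    (hD : ContinuousAt D z) : HasLineDerivAt ℝ f (a + D z) z (u + v) := by
  have hsplit : (fun s : ℝ => f (z + s • (u + v))) =
      fun s => f (z + s • u) + (f (z + s • u + s • v) - f (z + s • u)) := by
    funext s
    rw [smul_add, ← add_assoc]
    abel
  rw [HasLineDerivAt, hsplit]
  refine HasDerivAt.add hu ?_
  rw [hasDerivAt_iff_isLittleO, Asymptotics.isLittleO_iff]
  intro c hc
  have hnear : ∀ᶠ y in 𝓝 z, HasLineDerivAt ℝ f (D y) y v ∧ ‖D y - D z‖ ≤ c := by
    refine hv.and ?_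
    filter_upwards [hD.eventually (Metric.closedBall_mem_nhds _ hc)] with y hy
    rwa [← dist_eq_norm]
  obtain ⟨δ, hδ, H⟩ := Metric.eventually_nhds_iff.1
    ((show Continuous fun p : ℝ × ℝ => z + p.1 • u + p.2 • v by fun_prop).tendsto'
      (0, 0) z (by simp) |>.eventually hnear)
  filter_upwards [Metric.ball_mem_nhds (0 : ℝ) hδ] with s hs
  have hmem : ∀ θ ∈ Set.uIcc 0 s, dist (s, θ) ((0, 0) : ℝ × ℝ) < δ := by
    intro θ hθ
    have hθs : |θ| ≤ |s| := by simpa using Set.abs_sub_left_of_mem_uIcc hθ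
    have hsδ : |s| < δ := by simpa using hs
    simpa [Prod.dist_eq] using ⟨hsδ, hθs.trans_lt hsδ⟩
  simpa using norm_sub_sub_smul_le_of_hasLineDerivAt (fun θ hθ => (H (hmem θ hθ)).1)
    fun θ hθ => (H (hmem θ hθ)).2

lemma hasLineDerivAt_sum_smul {ι : Type*} {f : V → F} {D : ι → V → F} {u : ι → V}
    (S : Finset ι) (c : ι → ℝ) (h : ∀ i ∈ S, ∀ z, HasLineDerivAt ℝ f (D i z) z (u i))
    (hD : ∀ i ∈ S, Continuous (D i)) (z : V) :
    HasLineDerivAt ℝ f (∑ i ∈ S, c i • D i z) z (∑ i ∈ S, c i • u i) := by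
  classical
  induction S using Finset.induction_on with
  | empty => simpa using hasLineDerivAt_zero
  | insert i S hi ih =>
    rw [Finset.sum_insert hi, Finset.sum_insert hi, add_comm, add_comm (c i • u i)]
    rw [Finset.forall_mem_insert] at h hD
    exact hasLineDerivAt_add (ih h.2 hD.2) (.of_forall fun y => (h.1 y).smul (c i))
      (hD.1.const_smul (c i)).continuousAt

end LineDeriv

section RpowGrowth

variable {V : Type*} [NormedAddCommGroup V] [NormedSpace ℝ V]

lemma dyadic_induction {P : V → Prop} {δ : ℝ} (hδ : 0 < δ) (zero : P 0)
    (base : ∀ y, ‖y‖ ≤ δ → δ < 2 * ‖y‖ → P y)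
    (step : ∀ y ≠ 0, 2 * ‖y‖ ≤ δ → P ((2 : ℝ) • y) → P y) {y : V} (hy : ‖y‖ ≤ δ) : P y := by
  have scales : ∀ n : ℕ, ∀ y, ‖y‖ ≤ δ → δ < 2 ^ (n + 1) * ‖y‖ → P y := by
    intro n
    induction n with
    | zero => simpa using base
    | succ n ih =>
      intro y hy hyn
      rcases lt_or_ge δ (2 * ‖y‖) with hlarge | hsmall
      · exact base y hy hlarge
      have hy₀ : y ≠ 0 := by
        rintro rfl
        simp only [norm_zero, mul_zero] at hyn
        exact hyn.not_gt hδ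
      have hnorm : ‖(2 : ℝ) • y‖ = 2 * ‖y‖ := by rw [norm_smul, Real.norm_two]
      refine step y hy₀ hsmall (ih _ (hnorm ▸ hsmall) ?_)
      rwa [hnorm, ← mul_assoc, ← pow_succ]
  rcases eq_or_ne y 0 with rfl | hy₀
  · exact zero
  · have hpos : 0 < ‖y‖ := norm_pos_iff.2 hy₀
    obtain ⟨n, hn⟩ := pow_unbounded_of_one_lt (δ / ‖y‖) one_lt_two
    refine scales n y hy (((div_lt_iff₀ hpos).1 hn).trans_le ?_)
    gcongr
    · exact one_le_two
    · exact n.le_succ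

/- Rescaling `y` to `2 y` until the norm is comparable to `δ` costs a factor `2 ^ β < 2` per step in
the right-hand side, but a full factor `2` on the left. -/
lemma abs_le_mul_rpow_norm_of_doubling {φ : V → ℝ} {A B β δ : ℝ} (hA : 0 ≤ A) (hβ₀ : 0 ≤ β)
    (hβ₁ : β < 1) (hδ : 0 < δ) (hφ₀ : φ 0 = 0) (hφB : ∀ y, ‖y‖ ≤ δ → |φ y| ≤ B)
    (hφA : ∀ y ≠ 0, 2 * ‖y‖ ≤ δ → |φ ((2 : ℝ) • y) - 2 * φ y| ≤ A * ‖y‖ ^ β)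
    {y : V} (hy : ‖y‖ ≤ δ) :
    |φ y| ≤ (B * (2 / δ) ^ β + A / (2 - 2 ^ β)) * ‖y‖ ^ β := by
  set K := B * (2 / δ) ^ β + A / (2 - 2 ^ β)
  have hB : 0 ≤ B := (abs_nonneg _).trans (hφB 0 (by simpa using hδ.le))
  have hgap : 0 < 2 - (2 : ℝ) ^ β := by
    simpa using Real.rpow_lt_rpow_of_exponent_lt one_lt_two hβ₁
  have hBK : B * (2 / δ) ^ β ≤ K := le_add_of_nonneg_right (by positivity)
  have hAK : A + 2 ^ β * K ≤ 2 * K := by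
    have : A / (2 - 2 ^ β) ≤ K := le_add_of_nonneg_left (by positivity)
    linarith [(div_le_iff₀ hgap).1 this]
  have base : ∀ y, ‖y‖ ≤ δ → δ < 2 * ‖y‖ → |φ y| ≤ K * ‖y‖ ^ β := by
    intro y hy hlarge
    have hone : 1 ≤ (2 / δ) ^ β * ‖y‖ ^ β := by
      rw [← Real.mul_rpow (by positivity) (norm_nonneg y)]
      refine Real.one_le_rpow ?_ hβ₀
      rw [div_mul_eq_mul_div, one_le_div hδ]
      exact hlarge.le
    calc |φ y| ≤ B * ((2 / δ) ^ β * ‖y‖ ^ β) := (hφB y hy).trans (le_mul_of_one_le_right hB hone)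
      _ ≤ K * ‖y‖ ^ β := by rw [← mul_assoc]; gcongr
  have zero : |φ 0| ≤ K * ‖(0 : V)‖ ^ β := by
    rw [hφ₀, abs_zero]
    positivity
  refine dyadic_induction hδ zero base (fun y hy₀ hy hdouble => ?_) hy
  rw [norm_smul, Real.norm_two, Real.mul_rpow zero_le_two (norm_nonneg y)] at hdouble
  have hstep := abs_le.1 (hφA y hy₀ hy)
  have hclose := mul_le_mul_of_nonneg_right hAK (Real.rpow_nonneg (norm_nonneg y) β)
  rw [abs_le] at hdouble ⊢
  constructor <;> linarith [hstep.1, hstep.2, hdouble.1, hdouble.2]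

end RpowGrowth

section KineticDerivatives

/-- The velocity gradient `∇_v g`, as a coordinate vector. -/
def gradv (g : Z d → ℝ) (z : Z d) : Fin d → ℝ := fun i => pv g i z

/-- The velocity Hessian `D²_v g`, as a matrix that is not assumed to be symmetric. -/
def hessv (g : Z d → ℝ) (z : Z d) : Matrix (Fin d) (Fin d) ℝ := Matrix.of fun i j => pvv g i j z

lemma abs_dotProduct_mulVec_le {n : Type*} [Fintype n] (M : Matrix n n ℝ)
    (w : EuclideanSpace ℝ n) :
    |w.ofLp ⬝ᵥ M *ᵥ w.ofLp| ≤ (∑ i, ∑ j, |M i j|) * ‖w‖ ^ 2 := by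
  have hw : ∀ i, |w i| ≤ ‖w‖ := fun i => by simpa using PiLp.norm_apply_le w i
  simp only [dotProduct, Matrix.mulVec, Finset.mul_sum, Finset.sum_mul]
  refine (Finset.abs_sum_le_sum_abs _ _).trans (Finset.sum_le_sum fun i _ =>
    (Finset.abs_sum_le_sum_abs _ _).trans (Finset.sum_le_sum fun j _ => ?_))
  calc |w i * (M i j * w j)| = |M i j| * (|w i| * |w j|) := by simp only [abs_mul]; ring
    _ ≤ |M i j| * (‖w‖ * ‖w‖) := by gcongr <;> exact hw _
    _ = |M i j| * ‖w‖ ^ 2 := by rw [sq]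

lemma sum_smul_single (w : E d) : ∑ i, w i • EuclideanSpace.single i (1 : ℝ) = w := by
  simpa using (EuclideanSpace.basisFun (Fin d) ℝ).sum_repr w

lemma sum_smul_space_single (w : E d) :
    ∑ i, w i • ((0, EuclideanSpace.single i 1, 0) : Z d) = (0, w, 0) := by
  refine Prod.ext ?_ (Prod.ext ?_ ?_) <;>
    simp [Prod.fst_sum, Prod.snd_sum, sum_smul_single]

lemma sum_smul_velocity_single (w : E d) :
    ∑ i, w i • ((0, 0, EuclideanSpace.single i 1) : Z d) = (0, 0, w) := by
  refine Prod.ext ?_ (Prod.ext ?_ ?_) <;>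
    simp [Prod.fst_sum, Prod.snd_sum, sum_smul_single]

variable {g : Z d → ℝ}

lemma KinReg.hasLineDerivAt_time (hg : KinReg g Set.univ) (z : Z d) :
    HasLineDerivAt ℝ g (pt g z) z (1, 0, 0) := by
  have h : HasDerivAt (fun s => g (s, z.2.1, z.2.2)) (pt g z) (z.1 + 0) := by
    rw [add_zero]
    exact (hg.dt z trivial).hasDerivAt
  refine (h.comp_const_add z.1 0).congr_of_eventuallyEq (.of_forall fun s => ?_)
  exact congrArg g (Prod.ext (by simp) (Prod.ext (by simp) (by simp)))

lemma KinReg.hasLineDerivAt_space_single (hg : KinReg g Set.univ) (i : Fin d) (z : Z d) :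
    HasLineDerivAt ℝ g (px g i z) z (0, EuclideanSpace.single i 1, 0) := by
  refine (hg.dx z trivial i).hasDerivAt.congr_of_eventuallyEq (.of_forall fun s => ?_)
  exact congrArg g (Prod.ext (by simp) (Prod.ext (by simp) (by simp)))

lemma KinReg.hasLineDerivAt_velocity_single (hg : KinReg g Set.univ) (i : Fin d) (z : Z d) :
    HasLineDerivAt ℝ g (pv g i z) z (0, 0, EuclideanSpace.single i 1) := by
  refine (hg.dv z trivial i).hasDerivAt.congr_of_eventuallyEq (.of_forall fun s => ?_)
  exact congrArg g (Prod.ext (by simp) (Prod.ext (by simp) (by simp)))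

lemma KinReg.hasLineDerivAt_pv_velocity_single (hg : KinReg g Set.univ) (i j : Fin d) (z : Z d) :
    HasLineDerivAt ℝ (pv g j) (pvv g i j z) z (0, 0, EuclideanSpace.single i 1) := by
  refine (hg.dvv z trivial i j).hasDerivAt.congr_of_eventuallyEq (.of_forall fun s => ?_)
  exact congrArg (pv g j) (Prod.ext (by simp) (Prod.ext (by simp) (by simp)))

lemma KinReg.hasLineDerivAt_transport (hg : KinReg g Set.univ) (z : Z d) :
    HasLineDerivAt ℝ g (Yop g z) z (1, z.2.2, 0) := by
  have hpx : ∀ i, Continuous (px g i) := fun i => continuousOn_univ.1 (hg.pxc i)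
  have hspace : ∀ y, HasLineDerivAt ℝ g (∑ i, z.2.2 i • px g i y) y (0, z.2.2, 0) := fun y => by
    rw [← sum_smul_space_single]
    exact hasLineDerivAt_sum_smul _ _ (fun i _ => hg.hasLineDerivAt_space_single i)
      (fun i _ => hpx i) y
  simpa [Yop] using hasLineDerivAt_add (hg.hasLineDerivAt_time z) (.of_forall hspace)
    (by fun_prop)

lemma KinReg.hasLineDerivAt_velocity (hg : KinReg g Set.univ) (w : E d) (z : Z d) :
    HasLineDerivAt ℝ g (w.ofLp ⬝ᵥ gradv g z) z (0, 0, w) := by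
  rw [← sum_smul_velocity_single]
  exact hasLineDerivAt_sum_smul _ _ (fun i _ => hg.hasLineDerivAt_velocity_single i)
    (fun i _ => continuousOn_univ.1 (hg.pvc i)) z

lemma KinReg.hasLineDerivAt_gradv (hg : KinReg g Set.univ) (w : E d) (z : Z d) :
    HasLineDerivAt ℝ (fun z => w.ofLp ⬝ᵥ gradv g z) (w.ofLp ⬝ᵥ hessv g z *ᵥ w.ofLp)
      z (0, 0, w) := by
  have hpv : ∀ j, HasLineDerivAt ℝ (pv g j) (∑ i, w i • pvv g i j z) z (0, 0, w) := fun j => by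
    rw [← sum_smul_velocity_single]
    exact hasLineDerivAt_sum_smul _ _ (fun i _ => hg.hasLineDerivAt_pv_velocity_single i j)
      (fun i _ => continuousOn_univ.1 (hg.pvvc i j)) z
  have hsum : w.ofLp ⬝ᵥ hessv g z *ᵥ w.ofLp = ∑ j, w j * ∑ i, w i • pvv g i j z := by
    rw [Matrix.dotProduct_mulVec, dotProduct_comm]
    rfl
  rw [hsum]
  exact HasDerivAt.fun_sum fun j _ => (hpv j).const_mul (w j)

end KineticDerivatives

section KineticGeometry

/-- The Galilean composition `z ∘ (τ, y, u)`, i.e. the point with coordinates `(τ, y, u)` in the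
frame centred at `z` and moving with the velocity of `z`. -/
def galilei (z : Z d) (τ : ℝ) (y u : E d) : Z d :=
  (z.1 + τ, z.2.1 + y + τ • z.2.2, z.2.2 + u)

lemma galilei_zero (z : Z d) : galilei z 0 0 0 = z := by
  simp [galilei]

lemma galilei_galilei (z : Z d) (τ τ' : ℝ) (y u y' u' : E d) :
    galilei (galilei z τ y u) τ' y' u' = galilei z (τ + τ') (y + y' + τ' • u) (u + u') := by
  refine Prod.ext (add_assoc _ _ _) (Prod.ext ?_ (add_assoc _ _ _))
  simp only [galilei]
  module

lemma exists_galilei_eq (z z' : Z d) : ∃ τ y u, galilei z τ y u = z' := by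
  refine ⟨z'.1 - z.1, z'.2.1 - z.2.1 - (z'.1 - z.1) • z.2.2, z'.2.2 - z.2.2, ?_⟩
  refine Prod.ext (add_sub_cancel _ _) (Prod.ext ?_ (add_sub_cancel _ _))
  simp only [galilei]
  abel

lemma galilei_add_transport (z : Z d) (τ s : ℝ) (y u : E d) :
    galilei z τ y u + s • (1, (galilei z τ y u).2.2, 0) = galilei z (τ + s) (y + s • u) u := by
  refine Prod.ext ?_ (Prod.ext ?_ ?_)
  · simp [galilei, add_assoc]
  · simp only [galilei, Prod.snd_add, Prod.fst_add, Prod.smul_snd, Prod.smul_fst]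
    module
  · simp [galilei]

lemma galilei_add_velocity (z : Z d) (τ : ℝ) (y u w : E d) :
    galilei z τ y u + (0, 0, w) = galilei z τ y (u + w) := by
  ext <;> simp [galilei, add_assoc]

lemma galilei_mem_kCyl {z : Z d} {ρ τ : ℝ} {y u : E d} :
    galilei z τ y u ∈ kCyl ρ z ↔ -ρ ^ 2 < τ ∧ τ ≤ 0 ∧ ‖y‖ < ρ ^ 3 ∧ ‖u‖ < ρ := by
  have hy : z.2.1 + y + τ • z.2.2 - z.2.1 - τ • z.2.2 = y := by abel
  simp only [galilei, kCyl, Set.mem_ofPred_eq, hy, add_sub_cancel_left, add_le_iff_nonpos_right]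
  rw [sub_eq_add_neg, add_lt_add_iff_left]

lemma mem_kCyl_self {z : Z d} {ρ : ℝ} (hρ : 0 < ρ) : z ∈ kCyl ρ z := by
  simpa [galilei_zero] using (galilei_mem_kCyl (z := z) (τ := 0) (y := 0) (u := 0)).2
    ⟨by simpa using sq_pos_of_pos hρ, le_rfl, by simpa using pow_pos hρ 3, by simpa using hρ⟩

lemma kCyl_mono {z : Z d} {r R : ℝ} (hr : 0 ≤ r) (hR : r ≤ R) : kCyl r z ⊆ kCyl R z := by
  rintro z' ⟨h₁, h₂, h₃, h₄⟩
  exact ⟨by linarith [pow_le_pow_left₀ hr hR 2], h₂, h₃.trans_le (pow_le_pow_left₀ hr hR 3),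
    h₄.trans_le hR⟩

lemma kCyl_subset_kCyl_add {z₁ z₀ : Z d} {ρ R : ℝ} (hρ : 0 < ρ)
    (h : z₁ ∈ kCyl R z₀) : kCyl ρ z₁ ⊆ kCyl (R + ρ) z₀ := by
  intro z hz
  have hR : 0 < R := (norm_nonneg _).trans_lt h.2.2.2
  obtain ⟨σ, x, v, rfl⟩ := exists_galilei_eq z₀ z₁
  obtain ⟨τ, y, u, rfl⟩ := exists_galilei_eq (galilei z₀ σ x v) z
  rw [galilei_galilei]
  rw [galilei_mem_kCyl] at h hz ⊢
  obtain ⟨hσ, hσ₀, hx, hv⟩ := h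
  obtain ⟨hτ, hτ₀, hy, hu⟩ := hz
  have hτv : ‖τ • v‖ ≤ ρ ^ 2 * R := by
    rw [norm_smul, Real.norm_eq_abs]
    gcongr
    exact abs_le.2 ⟨by linarith, by linarith [sq_nonneg ρ]⟩
  have hcross : 0 < 2 * ρ ^ 2 * R + 3 * R ^ 2 * ρ := by positivity
  refine ⟨by nlinarith, by linarith, ?_, ?_⟩
  · calc ‖x + y + τ • v‖ ≤ ‖x‖ + ‖y‖ + ‖τ • v‖ := norm_add₃_le
      _ < (R + ρ) ^ 3 := by linarith [show (R + ρ) ^ 3 =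
          R ^ 3 + ρ ^ 3 + ρ ^ 2 * R + (2 * ρ ^ 2 * R + 3 * R ^ 2 * ρ) by ring]
  · exact (norm_add_le _ _).trans_lt (by linarith)

lemma convex_kCyl (r : ℝ) (z : Z d) : Convex ℝ (kCyl r z) := by
  rintro a ⟨ha₁, ha₂, ha₃, ha₄⟩ b ⟨hb₁, hb₂, hb₃, hb₄⟩ p q hp hq hpq
  obtain rfl : q = 1 - p := by linarith
  have hx := convex_ball (0 : E d) (r ^ 3) (mem_ball_zero_iff.2 ha₃) (mem_ball_zero_iff.2 hb₃)
    hp hq hpq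
  have hv := convex_ball (0 : E d) r (mem_ball_zero_iff.2 ha₄) (mem_ball_zero_iff.2 hb₄) hp hq hpq
  rw [mem_ball_zero_iff] at hx hv
  refine ⟨convex_Ioi (𝕜 := ℝ) (z.1 - r ^ 2) ha₁ hb₁ hp hq hpq,
    convex_Iic (𝕜 := ℝ) z.1 ha₂ hb₂ hp hq hpq,
    (congrArg norm ?_).trans_lt hx, (congrArg norm ?_).trans_lt hv⟩
  · change p • a.2.1 + (1 - p) • b.2.1 - z.2.1 - (p * a.1 + (1 - p) * b.1 - z.1) • z.2.2 = _
    module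
  · change p • a.2.2 + (1 - p) • b.2.2 - z.2.2 = _
    module

end KineticGeometry

section Increments

/-- The derivatives of kinetic order two of `g`, namely the transport derivative and the velocity
Hessian (in the entrywise `ℓ¹` norm), differ on `kCyl ρ z` by at most `ε` from their values
at `z`. -/
structure TopOrderOscLE (g : Z d → ℝ) (z : Z d) (ρ ε : ℝ) : Prop where
  transport : ∀ z' ∈ kCyl ρ z, |Yop g z' - Yop g z| ≤ ε
  hessian : ∀ z' ∈ kCyl ρ z, ∑ i, ∑ j, |pvv g i j z' - pvv g i j z| ≤ ε

variable {g : Z d → ℝ} {z : Z d} {ρ ε τ s : ℝ} {y u w : E d}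

lemma TopOrderOscLE.abs_transport_increment_le (hosc : TopOrderOscLE g z ρ ε)
    (hg : KinReg g Set.univ) (h₀ : galilei z τ y u ∈ kCyl ρ z)
    (h₁ : galilei z (τ + s) (y + s • u) u ∈ kCyl ρ z) :
    |g (galilei z (τ + s) (y + s • u) u) - g (galilei z τ y u) - s * Yop g z| ≤ ε * |s| := by
  set a := galilei z τ y u
  rw [← galilei_add_transport] at h₁ ⊢
  refine norm_sub_sub_smul_le_of_hasLineDerivAt
    (f' := fun θ => Yop g (a + θ • (1, a.2.2, 0))) (fun θ _ => ?_) (fun θ hθ => ?_)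
  · have hvel : (a + θ • (1, a.2.2, 0)).2.2 = a.2.2 := by simp
    have hderiv := hg.hasLineDerivAt_transport (a + θ • (1, a.2.2, 0))
    rwa [hvel] at hderiv
  · rw [← segment_eq_uIcc, segment_eq_image] at hθ
    obtain ⟨t, ht, rfl⟩ := hθ
    refine hosc.transport _ ?_
    simpa [smul_smul] using (convex_kCyl ρ z).add_smul_mem h₀ h₁ ht

lemma TopOrderOscLE.abs_velocity_taylor_le (hosc : TopOrderOscLE g z ρ ε)
    (hg : KinReg g Set.univ) (h₀ : galilei z τ y 0 ∈ kCyl ρ z) (h₁ : galilei z τ y w ∈ kCyl ρ z) :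
    |g (galilei z τ y w) - g (galilei z τ y 0) - w.ofLp ⬝ᵥ gradv g (galilei z τ y 0)
      - 1 / 2 * (w.ofLp ⬝ᵥ hessv g z *ᵥ w.ofLp)| ≤ ε * ‖w‖ ^ 2 := by
  rw [show galilei z τ y w = galilei z τ y 0 + (0, 0, w) by
    rw [galilei_add_velocity, zero_add]] at h₁ ⊢
  refine norm_sub_taylor_two_le_of_hasLineDerivAt
    (f'' := fun z' => w.ofLp ⬝ᵥ hessv g z' *ᵥ w.ofLp) (fun θ _ => hg.hasLineDerivAt_velocity w _)
    (fun θ _ => hg.hasLineDerivAt_gradv w _) (fun θ hθ => ?_)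
  rw [← dotProduct_sub, ← Matrix.sub_mulVec]
  refine (abs_dotProduct_mulVec_le _ w).trans ?_
  gcongr
  exact hosc.hessian _ ((convex_kCyl ρ z).add_smul_mem h₀ h₁ hθ)

/- Going around the loop "jump by `w`, stream for time `s`, jump by `-w`, stream for time `-s`"
displaces the position by `s • w`; the transport and Hessian terms of opposite edges cancel. -/
lemma TopOrderOscLE.abs_spatial_increment_le (hosc : TopOrderOscLE g z ρ ε)
    (hg : KinReg g Set.univ) (hτ : τ ∈ Set.Ioc (-ρ ^ 2) 0) (hs : τ + s ∈ Set.Ioc (-ρ ^ 2) 0)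
    (hsw : ‖s • w‖ < ρ ^ 3) (hw : ‖w‖ < ρ) :
    |g (galilei z τ (s • w) 0) - g (galilei z τ 0 0)
      - w.ofLp ⬝ᵥ (gradv g (galilei z τ 0 0) - gradv g (galilei z (τ + s) (s • w) 0))|
      ≤ ε * (2 * ‖w‖ ^ 2 + 2 * |s|) := by
  have hρ : 0 < ρ := (norm_nonneg w).trans_lt hw
  have mem : ∀ {σ : ℝ} {y u : E d}, σ ∈ Set.Ioc (-ρ ^ 2) 0 → ‖y‖ < ρ ^ 3 → ‖u‖ < ρ →
      galilei z σ y u ∈ kCyl ρ z :=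
    fun hσ hy hu => galilei_mem_kCyl.2 ⟨hσ.1, hσ.2, hy, hu⟩
  have h₀ : ‖(0 : E d)‖ < ρ := by simpa using hρ
  have h₀' : ‖(0 : E d)‖ < ρ ^ 3 := by simpa using pow_pos hρ 3
  have jump₁ := abs_le.1 <| hosc.abs_velocity_taylor_le hg (mem hτ h₀' h₀) (mem hτ h₀' hw)
  have stream₁ := abs_le.1 <| hosc.abs_transport_increment_le hg (s := s) (mem hτ h₀' hw)
    (mem hs (by simpa using hsw) hw)
  have jump₂ := abs_le.1 <| hosc.abs_velocity_taylor_le hg (mem hs hsw h₀) (mem hs hsw hw)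
  have stream₂ := abs_le.1 <| hosc.abs_transport_increment_le hg (s := s) (mem hτ hsw h₀)
    (mem hs (by simpa using hsw) h₀)
  rw [zero_add] at stream₁
  rw [smul_zero, add_zero] at stream₂
  rw [dotProduct_sub, abs_le]
  constructor <;> linarith [jump₁.1, jump₁.2, stream₁.1, stream₁.2, jump₂.1, jump₂.2, stream₂.1,
    stream₂.2]

/-- The symmetric second difference of `g` in the position variable, with step `y`, centred at the
point reached from `z` by free transport for the time `τ`. -/
def spatialSecondDiff (g : Z d → ℝ) (z : Z d) (τ : ℝ) (y : E d) : ℝ :=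
  g (galilei z τ y 0) + g (galilei z τ (-y) 0) - 2 * g (galilei z τ 0 0)

lemma TopOrderOscLE.abs_spatialSecondDiff_sub_le (hosc : TopOrderOscLE g z ρ ε)
    (hg : KinReg g Set.univ) (hτ : τ ∈ Set.Ioc (-ρ ^ 2) 0) (hs : τ + s ∈ Set.Ioc (-ρ ^ 2) 0)
    (hsw : ‖s • w‖ < ρ ^ 3) (hw : ‖w‖ < ρ) :
    |spatialSecondDiff g z τ (s • w) - w.ofLp ⬝ᵥ
        (gradv g (galilei z (τ + s) (-(s • w)) 0) - gradv g (galilei z (τ + s) (s • w) 0))|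
      ≤ ε * (4 * ‖w‖ ^ 2 + 4 * |s|) := by
  have forth := abs_le.1 <| hosc.abs_spatial_increment_le hg hτ hs hsw hw
  have back := abs_le.1 <| hosc.abs_spatial_increment_le hg hτ hs (w := -w) (by simpa using hsw)
    (by simpa using hw)
  rw [smul_neg, norm_neg, WithLp.ofLp_neg, neg_dotProduct] at back
  simp only [spatialSecondDiff, dotProduct_sub] at forth back ⊢
  rw [abs_le]
  constructor <;> linarith [forth.1, forth.2, back.1, back.2]

lemma TopOrderOscLE.abs_spatialSecondDiff_transport_le (hosc : TopOrderOscLE g z ρ ε)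
    (hg : KinReg g Set.univ) (hs : s ∈ Set.Ioc (-ρ ^ 2) 0) (hy : ‖y‖ < ρ ^ 3) (hρ : 0 < ρ) :
    |spatialSecondDiff g z s y - spatialSecondDiff g z 0 y| ≤ ε * (4 * |s|) := by
  have increment : ∀ x : E d, ‖x‖ < ρ ^ 3 →
      |g (galilei z s x 0) - g (galilei z 0 x 0) - s * Yop g z| ≤ ε * |s| := fun x hx => by
    have h₀ : galilei z 0 x 0 ∈ kCyl ρ z :=
      galilei_mem_kCyl.2 ⟨by simpa using pow_pos hρ 2, le_rfl, hx, by simpa using hρ⟩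
    have h₁ : galilei z (0 + s) (x + s • 0) 0 ∈ kCyl ρ z :=
      galilei_mem_kCyl.2 ⟨by simpa using hs.1, by simpa using hs.2, by simpa using hx,
        by simpa using hρ⟩
    simpa using hosc.abs_transport_increment_le hg h₀ h₁
  have h := abs_le.1 (increment y hy)
  have h' := abs_le.1 (increment (-y) (by rwa [norm_neg]))
  have h₀ := abs_le.1 (increment 0 (by simpa using pow_pos hρ 3))
  simp only [spatialSecondDiff]
  rw [abs_le]
  constructor <;> linarith [h.1, h.2, h'.1, h'.2, h₀.1, h₀.2]

/- The displacement `y` is produced both in time `s` with velocity `w` and in time `s / 2` with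
velocity `2 • w`. The two gradient terms are then proportional with ratio `2`, whereas the second
differences themselves nearly agree, so that the gradients can be eliminated. -/
lemma TopOrderOscLE.abs_spatialSecondDiff_le {r : ℝ} (hosc : TopOrderOscLE g z (3 * r) ε)
    (hg : KinReg g Set.univ) (hr : 0 < r) (hy : ‖y‖ ≤ r ^ 3) :
    |spatialSecondDiff g z 0 y| ≤ 36 * ε * r ^ 2 := by
  obtain ⟨s, hs⟩ : ∃ s, s = -r ^ 2 := ⟨_, rfl⟩
  have hr₂ : 0 < r ^ 2 := pow_pos hr 2
  have hr₃ : 0 < r ^ 3 := pow_pos hr 3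
  have habs : |s| = r ^ 2 := by rw [hs, abs_neg, abs_of_pos hr₂]
  have hε : 0 ≤ ε := (abs_nonneg _).trans (hosc.transport z (mem_kCyl_self (by positivity)))
  obtain ⟨w, rfl⟩ : ∃ w, s • w = y :=
    ⟨s⁻¹ • y, smul_inv_smul₀ (by rw [hs]; exact (neg_neg_of_pos hr₂).ne) y⟩
  have hw : ‖w‖ ≤ r := by
    rw [norm_smul, Real.norm_eq_abs, habs, pow_succ] at hy
    exact le_of_mul_le_mul_left hy hr₂
  have hy' : ‖s • w‖ < (3 * r) ^ 3 := by rw [mul_pow]; linarith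
  have hhalf : (s / 2) • (2 : ℝ) • w = s • w := by rw [smul_smul, div_mul_cancel₀ _ two_ne_zero]
  have hw₂ : ‖(2 : ℝ) • w‖ = 2 * ‖w‖ := by simp [norm_smul]
  have time : ∀ σ, s ≤ σ → σ ≤ 0 → σ ∈ Set.Ioc (-(3 * r) ^ 2) 0 := fun σ h h' =>
    ⟨by rw [mul_pow]; linarith, h'⟩
  have full := abs_le.1 <| hosc.abs_spatialSecondDiff_sub_le hg (time 0 (by linarith) le_rfl)
    (time (0 + s) (by linarith) (by linarith)) hy' (by linarith)
  have half := abs_le.1 <| hosc.abs_spatialSecondDiff_sub_le hg (s := s / 2) (w := (2 : ℝ) • w)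
    (time (s / 2) (by linarith) (by linarith))
    (time (s / 2 + s / 2) (by linarith) (by linarith)) (by rwa [hhalf]) (by linarith)
  have stream := abs_le.1 <| hosc.abs_spatialSecondDiff_transport_le hg
    (time (s / 2) (by linarith) (by linarith)) hy' (by positivity)
  have hεw : ε * ‖w‖ ^ 2 ≤ ε * r ^ 2 := by gcongr
  rw [zero_add, habs] at full
  rw [hhalf, add_halves, hw₂, abs_div, abs_two, habs, WithLp.ofLp_smul, smul_dotProduct,
    smul_eq_mul] at half
  rw [abs_div, abs_two, habs] at stream
  rw [abs_le]
  constructor <;> linarith [full.1, full.2, half.1, half.2, stream.1, stream.2]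

end Increments

section HolderBound

/-- `T` bounds `|g|` on `Q`, as well as the kinetic `α`-Hölder constants on `Q` of the transport
derivative and of the velocity Hessian of `g`. -/
structure KinHolderBound (g : Z d → ℝ) (α T : ℝ) (Q : Set (Z d)) : Prop where
  abs_apply_le : ∀ z ∈ Q, |g z| ≤ T
  osc_le : ∀ z ρ, 0 < ρ → kCyl ρ z ⊆ Q → TopOrderOscLE g z ρ (T * ρ ^ α)

variable {g : Z d → ℝ} {α T r : ℝ} {Q : Set (Z d)} {z : Z d}

lemma rpow_mul_sq (hr : 0 < r) : r ^ α * r ^ 2 = r ^ (2 + α) := by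
  rw [← Real.rpow_natCast, ← Real.rpow_add hr, add_comm]
  norm_cast

lemma pow_three_rpow_div_three (hr : 0 ≤ r) : (r ^ 3) ^ ((2 + α) / 3) = r ^ (2 + α) := by
  rw [← Real.rpow_natCast, ← Real.rpow_mul hr]
  norm_num [mul_div_cancel₀]

lemma KinHolderBound.abs_spatialSecondDiff_le (h : KinHolderBound g α T Q)
    (hg : KinReg g Set.univ) (hα₁ : α < 1) (hr : 0 < r) (hQ : kCyl (3 * r) z ⊆ Q) {y : E d}
    (hy : ‖y‖ ≤ r ^ 3) : |spatialSecondDiff g z 0 y| ≤ 108 * T * r ^ (2 + α) := by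
  have hT : 0 ≤ T :=
    (abs_nonneg _).trans (h.abs_apply_le z (hQ (mem_kCyl_self (by positivity))))
  have hthree : (3 : ℝ) ^ α ≤ 3 := by
    simpa using Real.rpow_le_rpow_of_exponent_le (x := 3) (by norm_num) hα₁.le
  calc |spatialSecondDiff g z 0 y| ≤ 36 * (T * (3 * r) ^ α) * r ^ 2 :=
        (h.osc_le z _ (by positivity) hQ).abs_spatialSecondDiff_le hg hr hy
    _ = 36 * (T * (3 : ℝ) ^ α) * (r ^ α * r ^ 2) := by
        rw [Real.mul_rpow (by norm_num) hr.le]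
        ring
    _ ≤ 36 * (T * 3) * (r ^ α * r ^ 2) := by gcongr
    _ = 108 * T * r ^ (2 + α) := by
        rw [rpow_mul_sq hr]
        ring

/-- The factor by which the Hölder constant of order `(2 + α) / 3` in the position variable exceeds
a `KinHolderBound`, as produced by `abs_le_mul_rpow_norm_of_doubling`. -/
def spatialHolderConst (α : ℝ) : ℝ :=
  2 * 250 ^ ((2 + α) / 3) + 108 / (2 - 2 ^ ((2 + α) / 3))

lemma spatialHolderConst_nonneg (hα₁ : α < 1) : 0 ≤ spatialHolderConst α := by
  have hgap : 0 < 2 - (2 : ℝ) ^ ((2 + α) / 3) := by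
    simpa using Real.rpow_lt_rpow_of_exponent_lt one_lt_two (show (2 + α) / 3 < 1 by linarith)
  unfold spatialHolderConst
  positivity

lemma KinHolderBound.abs_spatial_sub_le (h : KinHolderBound g α T Q) (hg : KinReg g Set.univ)
    (hα : -2 ≤ α) (hα₁ : α < 1) (hQ : kCyl 1 z ⊆ Q) {y : E d} (hy : ‖y‖ ≤ 1 / 125) :
    |g (galilei z 0 y 0) - g z| ≤ spatialHolderConst α * T * ‖y‖ ^ ((2 + α) / 3) := by
  have hz : z ∈ Q := hQ (mem_kCyl_self one_pos)
  have hT : 0 ≤ T := (abs_nonneg _).trans (h.abs_apply_le z hz)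
  have shift_mem : ∀ {ρ : ℝ} {y : E d}, 0 < ρ → ‖y‖ < ρ ^ 3 → galilei z 0 y 0 ∈ kCyl ρ z :=
    fun hρ hy => galilei_mem_kCyl.2 ⟨by simpa using pow_pos hρ 2, le_rfl, hy, by simpa using hρ⟩
  have hbound : ∀ y : E d, ‖y‖ ≤ 1 / 125 → |g (galilei z 0 y 0) - g z| ≤ 2 * T := fun y hy => by
    have hy' := h.abs_apply_le _ (hQ (shift_mem (y := y) one_pos (by linarith)))
    linarith [abs_sub (g (galilei z 0 y 0)) (g z), h.abs_apply_le z hz]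
  have hdouble : ∀ y : E d, y ≠ 0 → 2 * ‖y‖ ≤ 1 / 125 →
      |g (galilei z 0 ((2 : ℝ) • y) 0) - g z - 2 * (g (galilei z 0 y 0) - g z)|
        ≤ 108 * T * ‖y‖ ^ ((2 + α) / 3) := fun y hy₀ hy => by
    obtain ⟨r, hr, hry⟩ : ∃ r, 0 < r ∧ r ^ 3 = ‖y‖ :=
      ⟨‖y‖ ^ (3⁻¹ : ℝ), Real.rpow_pos_of_pos (norm_pos_iff.2 hy₀) _,
        by simpa using Real.rpow_inv_natCast_pow (norm_nonneg y) three_ne_zero⟩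
    have hr' : r ≤ 1 / 5 := le_of_pow_le_pow_left₀ three_ne_zero (by norm_num) (by linarith)
    have hsub : kCyl (3 * r) (galilei z 0 y 0) ⊆ Q :=
      (kCyl_subset_kCyl_add (by positivity)
        (shift_mem (ρ := 2 / 5) (by norm_num) (by linarith))).trans
          ((kCyl_mono (by positivity) (by linarith)).trans hQ)
    rw [← hry, pow_three_rpow_div_three hr.le]
    convert h.abs_spatialSecondDiff_le hg hα₁ hr hsub hry.ge using 2
    simp only [spatialSecondDiff, galilei_galilei]
    simp only [smul_zero, add_zero, add_neg_cancel, galilei_zero, two_smul]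
    ring
  have key := abs_le_mul_rpow_norm_of_doubling (by positivity) (by linarith) (by linarith)
    (by norm_num) (by simp [galilei_zero]) hbound hdouble hy
  convert key using 2
  rw [spatialHolderConst, show (2 : ℝ) / (1 / 125) = 250 by norm_num]
  ring

lemma KinHolderBound.abs_spatial_sub_le_of_norm_le (h : KinHolderBound g α T Q)
    (hg : KinReg g Set.univ) (hα : -2 ≤ α) (hα₁ : α < 1) (hQ : kCyl 1 z ⊆ Q) (hr₀ : 0 ≤ r)
    (hr : r ≤ 1 / 10) {y : E d} (hy : ‖y‖ ≤ 2 * r ^ 3) :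
    |g (galilei z 0 y 0) - g z| ≤ 2 * spatialHolderConst α * T * r ^ (2 + α) := by
  have hT : 0 ≤ T := (abs_nonneg _).trans (h.abs_apply_le z (hQ (mem_kCyl_self one_pos)))
  have hK := spatialHolderConst_nonneg hα₁
  have hsmall : 2 * r ^ 3 ≤ 1 / 125 := by linarith [pow_le_pow_left₀ hr₀ hr 3]
  have htwo : (2 : ℝ) ^ ((2 + α) / 3) ≤ 2 := by
    simpa using Real.rpow_le_rpow_of_exponent_le one_le_two (show (2 + α) / 3 ≤ 1 by linarith)
  calc |g (galilei z 0 y 0) - g z| ≤ spatialHolderConst α * T * ‖y‖ ^ ((2 + α) / 3) :=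
        h.abs_spatial_sub_le hg hα hα₁ hQ (hy.trans hsmall)
    _ ≤ spatialHolderConst α * T * (2 * r ^ 3) ^ ((2 + α) / 3) := by
        gcongr
        linarith
    _ ≤ spatialHolderConst α * T * (2 * r ^ (2 + α)) := by
        rw [Real.mul_rpow zero_le_two (by positivity), pow_three_rpow_div_three hr₀]
        gcongr
    _ = 2 * spatialHolderConst α * T * r ^ (2 + α) := by ring

end HolderBound

section Taylor

variable {g : Z d → ℝ} {α T r ρ ε τ : ℝ} {Q : Set (Z d)} {z : Z d} {y u : E d}

/-- The kinetic Taylor polynomial of degree two of `g` at `z`, in the coordinates given by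
`galilei z`; it does not involve the position, which has kinetic degree three. -/
def kinTaylor (g : Z d → ℝ) (z : Z d) (τ : ℝ) (u : E d) : ℝ :=
  g z + τ * Yop g z + u.ofLp ⬝ᵥ gradv g z + 1 / 2 * (u.ofLp ⬝ᵥ hessv g z *ᵥ u.ofLp)

lemma kpoly_eq (a b : ℝ) (q : Fin d → ℝ) (M : Matrix (Fin d) (Fin d) ℝ) (z : Z d) :
    kpoly a b q M z =
      a + b * z.1 + z.2.2.ofLp ⬝ᵥ q + 1 / 2 * (z.2.2.ofLp ⬝ᵥ M *ᵥ z.2.2.ofLp) := by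
  simp only [kpoly, dotProduct, Matrix.mulVec, Finset.mul_sum]
  congr! 3 with i _ i _ j _
  all_goals ring

lemma exists_kpoly_eq_kinTaylor (g : Z d → ℝ) (z : Z d) :
    ∃ a b q M, ∀ τ y u, kpoly a b q M (galilei z τ y u) = kinTaylor g z τ u := by
  set H := hessv g z
  set v := z.2.2.ofLp
  refine ⟨g z - z.1 * Yop g z - v ⬝ᵥ gradv g z + 1 / 2 * (v ⬝ᵥ H *ᵥ v), Yop g z,
    gradv g z - (1 / 2 : ℝ) • (H *ᵥ v + v ᵥ* H), H, fun τ y u => ?_⟩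
  have hvu : (v ᵥ* H) ⬝ᵥ v = v ⬝ᵥ H *ᵥ v := (Matrix.dotProduct_mulVec ..).symm
  have hvu' : u.ofLp ⬝ᵥ v ᵥ* H = v ⬝ᵥ H *ᵥ u.ofLp := by
    rw [dotProduct_comm, Matrix.dotProduct_mulVec]
  rw [kpoly_eq]
  simp only [kinTaylor, galilei, WithLp.ofLp_add, add_dotProduct, Matrix.mulVec_add, dotProduct_add,
    dotProduct_sub, dotProduct_smul, smul_eq_mul]
  rw [dotProduct_comm v (v ᵥ* H), hvu, hvu']
  ring

lemma TopOrderOscLE.abs_streaming_sub_kinTaylor_le (hosc : TopOrderOscLE g z ρ ε)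
    (hg : KinReg g Set.univ) (hτ : τ ∈ Set.Ioc (-ρ ^ 2) 0) (hu : ‖u‖ < ρ) :
    |g (galilei z τ (τ • u) u) - kinTaylor g z τ u| ≤ ε * (‖u‖ ^ 2 + |τ|) := by
  have hρ : 0 < ρ := (norm_nonneg u).trans_lt hu
  have hτu : ‖τ • u‖ < ρ ^ 3 := by
    rw [norm_smul, Real.norm_eq_abs, abs_of_nonpos hτ.2, pow_succ]
    exact mul_lt_mul'' (by linarith [hτ.1]) hu (by linarith [hτ.2]) (norm_nonneg u)
  have h₀ : galilei z 0 0 u ∈ kCyl ρ z :=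
    galilei_mem_kCyl.2 ⟨by simpa using pow_pos hρ 2, le_rfl, by simpa using pow_pos hρ 3, hu⟩
  have h₁ : galilei z (0 + τ) (0 + τ • u) u ∈ kCyl ρ z := by
    rw [zero_add, zero_add]
    exact galilei_mem_kCyl.2 ⟨hτ.1, hτ.2, hτu, hu⟩
  have jump := hosc.abs_velocity_taylor_le hg
    (by rw [galilei_zero]; exact mem_kCyl_self hρ) h₀
  have stream := hosc.abs_transport_increment_le hg h₀ h₁
  rw [galilei_zero] at jump
  rw [zero_add, zero_add] at stream
  rw [kinTaylor]
  rw [abs_le] at jump stream ⊢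
  constructor <;> linarith [jump.1, jump.2, stream.1, stream.2]

lemma KinHolderBound.abs_sub_kinTaylor_le (h : KinHolderBound g α T Q) (hg : KinReg g Set.univ)
    (hα : -2 ≤ α) (hα₁ : α < 1) (hr : r ≤ 1 / 10) (hz : galilei z τ y u ∈ kCyl r z)
    (hQ₀ : kCyl r z ⊆ Q) (hQ : kCyl 1 (galilei z τ y u) ⊆ Q) :
    |g (galilei z τ y u) - kinTaylor g z τ u|
      ≤ (2 * spatialHolderConst α + 2) * T * r ^ (2 + α) := by
  obtain ⟨hτ, hτ₀, hy, hu⟩ := galilei_mem_kCyl.1 hz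
  have hr₀ : 0 < r := (norm_nonneg u).trans_lt hu
  have hT : 0 ≤ T := (abs_nonneg _).trans (h.abs_apply_le _ (hQ₀ hz))
  have hτ' : |τ| ≤ r ^ 2 := by rw [abs_of_nonpos hτ₀]; linarith
  have stream : |g (galilei z τ (τ • u) u) - kinTaylor g z τ u| ≤ 2 * T * r ^ (2 + α) := by
    calc |g (galilei z τ (τ • u) u) - kinTaylor g z τ u| ≤ T * r ^ α * (‖u‖ ^ 2 + |τ|) :=
          (h.osc_le z r hr₀ hQ₀).abs_streaming_sub_kinTaylor_le hg ⟨hτ, hτ₀⟩ hu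
      _ ≤ T * r ^ α * (r ^ 2 + r ^ 2) := by gcongr
      _ = 2 * T * r ^ (2 + α) := by
          rw [← rpow_mul_sq hr₀]
          ring
  have shift : |g (galilei z τ (τ • u) u) - g (galilei z τ y u)|
      ≤ 2 * spatialHolderConst α * T * r ^ (2 + α) := by
    have hdist : ‖τ • u - y‖ ≤ 2 * r ^ 3 := by
      have hτu : ‖τ • u‖ ≤ r ^ 2 * r := by
        rw [norm_smul, Real.norm_eq_abs]
        gcongr
      linarith [norm_sub_le (τ • u) y, pow_succ r 2]
    simpa [galilei_galilei] using h.abs_spatial_sub_le_of_norm_le hg hα hα₁ hQ hr₀.le hr hdist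
  rw [abs_le] at stream shift ⊢
  constructor <;> linarith [stream.1, stream.2, shift.1, shift.2]

lemma KinHolderBound.exists_abs_sub_kpoly_le (h : KinHolderBound g α T Q)
    (hg : KinReg g Set.univ) (hα : -2 ≤ α) (hα₁ : α < 1) (hr : 0 < r)
    (hQ : ∀ z' ∈ kCyl r z, kCyl 1 z' ⊆ Q) :
    ∃ a b q M, ∀ z' ∈ kCyl r z,
      |g z' - kpoly a b q M z'| ≤ (2 * spatialHolderConst α + 1002) * T * r ^ (2 + α) := by
  have hQ₀ : kCyl r z ⊆ Q := fun z' hz' => hQ z' hz' (mem_kCyl_self one_pos)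
  have hT : 0 ≤ T := (abs_nonneg _).trans (h.abs_apply_le z (hQ₀ (mem_kCyl_self hr)))
  have hK := spatialHolderConst_nonneg hα₁
  have hTr : 0 ≤ T * r ^ (2 + α) := by positivity
  rcases le_or_gt r (1 / 10) with hsmall | hlarge
  · obtain ⟨a, b, q, M, hpoly⟩ := exists_kpoly_eq_kinTaylor g z
    refine ⟨a, b, q, M, fun z' hz' => ?_⟩
    obtain ⟨τ, y, u, rfl⟩ := exists_galilei_eq z z'
    rw [hpoly]
    linarith [h.abs_sub_kinTaylor_le hg hα hα₁ hsmall hz' hQ₀ (hQ _ hz')]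
  · have hone : 1 ≤ 1000 * r ^ (2 + α) := by
      have hpow : (1 / 10 : ℝ) ^ (3 : ℝ) ≤ r ^ (2 + α) :=
        (Real.rpow_le_rpow_of_exponent_ge (by norm_num) (by norm_num) (by linarith)).trans
          (Real.rpow_le_rpow (by norm_num) hlarge.le (by linarith))
      rw [show (1 / 10 : ℝ) ^ (3 : ℝ) = 1 / 1000 by norm_num] at hpow
      linarith
    refine ⟨0, 0, 0, 0, fun z' hz' => ?_⟩
    calc |g z' - kpoly 0 0 0 0 z'| ≤ T := by simpa [kpoly] using h.abs_apply_le z' (hQ₀ hz')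
      _ ≤ T * (1000 * r ^ (2 + α)) := le_mul_of_one_le_right hT hone
      _ ≤ (2 * spatialHolderConst α + 1002) * T * r ^ (2 + α) := by
          linarith [mul_nonneg hK hTr]

end Taylor

section Seminorms

variable {g f : Z d → ℝ} {α r C : ℝ} {Q : Set (Z d)} {z z₀ : Z d}

lemma abs_sub_le_of_kHolder_ne_top (hf : kHolder α Q f ≠ ⊤) (hr : 0 < r) (hQ : kCyl r z₀ ⊆ Q)
    (hz : z ∈ kCyl r z₀) :
    |f z - f z₀| ≤ (kHolder α Q f).toReal * r ^ α := by
  rw [← div_le_iff₀ (Real.rpow_pos_of_pos hr α), ← ENNReal.ofReal_le_iff_le_toReal hf]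
  exact le_iSup₂_of_le z₀ (hQ (mem_kCyl_self hr)) <| le_iSup₂_of_le r hr <| le_iSup_of_le hQ <|
    le_iSup₂_of_le (f := fun z _ => ENNReal.ofReal (|f z - f z₀| / r ^ α)) z hz le_rfl

lemma kSemi2_le_ofReal (h : ∀ z₀ ∈ Q, ∀ r > 0, kCyl r z₀ ⊆ Q →
    ∃ a b q M, ∀ z ∈ kCyl r z₀, |g z - kpoly a b q M z| ≤ C * r ^ (2 + α)) :
    kSemi2 α Q g ≤ ENNReal.ofReal C := by
  refine iSup₂_le fun z₀ hz₀ => iSup₂_le fun r hr => iSup_le fun hQ => ?_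
  obtain ⟨a, b, q, M, hpoly⟩ := h z₀ hz₀ r hr hQ
  refine ENNReal.div_le_of_le_mul ?_
  rw [← ENNReal.ofReal_mul' (by positivity)]
  exact iInf₂_le_of_le a b <| iInf₂_le_of_le q M <|
    iSup₂_le fun z hz => ENNReal.ofReal_le_ofReal (hpoly z hz)

/-- The right-hand side of the estimate: the kinetic `α`-Hölder seminorms of the derivatives of
kinetic order two, plus the supremum norm. -/
def topOrderHolderNorm (α : ℝ) (Q : Set (Z d)) (g : Z d → ℝ) : ℝ≥0∞ :=
  kHolder α Q (Yop g) + (∑ i, ∑ j, kHolder α Q (pvv g i j)) + supAbs Q g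

lemma kinHolderBound_toReal (h : topOrderHolderNorm α Q g ≠ ⊤) :
    KinHolderBound g α (topOrderHolderNorm α Q g).toReal Q := by
  have hle : kHolder α Q (Yop g) ≤ topOrderHolderNorm α Q g ∧
      ∑ i, ∑ j, kHolder α Q (pvv g i j) ≤ topOrderHolderNorm α Q g ∧
      supAbs Q g ≤ topOrderHolderNorm α Q g :=
    ⟨le_self_add.trans le_self_add, le_add_self.trans le_self_add, le_add_self⟩
  have hrow : ∀ i, ∑ j, kHolder α Q (pvv g i j) ≠ ⊤ := fun i =>
    ENNReal.sum_ne_top.1 (ne_top_of_le_ne_top h hle.2.1) i (Finset.mem_univ i)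
  have hpvv : ∀ i j, kHolder α Q (pvv g i j) ≠ ⊤ := fun i j =>
    ENNReal.sum_ne_top.1 (hrow i) j (Finset.mem_univ j)
  refine ⟨fun z hz => ?_, fun z ρ hρ hQ => ⟨fun z' hz' => ?_, fun z' hz' => ?_⟩⟩
  · rw [← ENNReal.ofReal_le_iff_le_toReal h]
    exact (le_iSup₂ (f := fun z _ => ENNReal.ofReal |g z|) z hz).trans hle.2.2
  · refine (abs_sub_le_of_kHolder_ne_top (ne_top_of_le_ne_top h hle.1) hρ hQ hz').trans ?_
    gcongr
    exact hle.1
  · calc ∑ i, ∑ j, |pvv g i j z' - pvv g i j z|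
        ≤ ∑ i, ∑ j, (kHolder α Q (pvv g i j)).toReal * ρ ^ α := by
          gcongr with i _ j _
          exact abs_sub_le_of_kHolder_ne_top (hpvv i j) hρ hQ hz'
      _ = (∑ i, ∑ j, kHolder α Q (pvv g i j)).toReal * ρ ^ α := by
          simp only [ENNReal.toReal_sum fun i _ => hrow i,
            ENNReal.toReal_sum fun j _ => hpvv _ j, Finset.sum_mul]
      _ ≤ (topOrderHolderNorm α Q g).toReal * ρ ^ α := by
          gcongr
          exact hle.2.1

end Seminorms

theorem local_seminorm_equivalence_general (α : ℝ) (hα : -2 ≤ α) (hα₁ : α < 1) :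
    ∃ C : ℝ, 0 < C ∧ ∀ (d : ℕ) (g : Z d → ℝ), KinReg g Set.univ → ∀ z₀ : Z d,
      supAbs (kCyl 1 z₀) g + kSemi2 α (kCyl 1 z₀) g
        ≤ ENNReal.ofReal C *
          (kHolder α (kCyl 2 z₀) (Yop g)
            + (∑ i, ∑ j, kHolder α (kCyl 2 z₀) (pvv g i j))
            + supAbs (kCyl 2 z₀) g) := by
  have hK := spatialHolderConst_nonneg hα₁
  refine ⟨1 + (2 * spatialHolderConst α + 1002), by positivity, fun d g hg z₀ => ?_⟩
  change _ ≤ _ * topOrderHolderNorm α (kCyl 2 z₀) g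
  set N := topOrderHolderNorm α (kCyl 2 z₀) g
  rcases eq_or_ne N ⊤ with htop | hfin
  · rw [htop, ENNReal.mul_top (ENNReal.ofReal_pos.2 (by positivity)).ne']
    exact le_top
  have hbound : KinHolderBound g α N.toReal (kCyl 2 z₀) := kinHolderBound_toReal hfin
  have hunit : ∀ z ∈ kCyl 1 z₀, kCyl 1 z ⊆ kCyl 2 z₀ := fun z hz =>
    one_add_one_eq_two (R := ℝ) ▸ kCyl_subset_kCyl_add one_pos hz
  have hsup : supAbs (kCyl 1 z₀) g ≤ N :=
    (biSup_mono (kCyl_mono zero_le_one one_le_two)).trans le_add_self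
  have hsemi : kSemi2 α (kCyl 1 z₀) g
      ≤ ENNReal.ofReal ((2 * spatialHolderConst α + 1002) * N.toReal) :=
    kSemi2_le_ofReal fun z₁ _ r hr hsub =>
      hbound.exists_abs_sub_kpoly_le hg hα hα₁ hr fun z hz => hunit z (hsub hz)
  rw [ENNReal.ofReal_mul (by positivity), ENNReal.ofReal_toReal hfin] at hsemi
  rw [ENNReal.ofReal_add zero_le_one (by positivity), ENNReal.ofReal_one, add_mul, one_mul]
  exact add_le_add hsup hsemi

/-- Equivalence of the kinetic `2+α` Hölder seminorm with the Hölder continuity of the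
highest kinetic-order derivatives: `‖g‖_{L^∞(Q₁(z₀))} + [g]_{C_ℓ^{2+α}(Q₁(z₀))}
≤ C ([∂_t g + v·∇_x g]_{C_ℓ^α(Q₂(z₀))} + Σ_{i,j} [∂²_{vᵢvⱼ} g]_{C_ℓ^α(Q₂(z₀))}
+ ‖g‖_{L^∞(Q₂(z₀))})` with `C = C(d, α)`. -/
theorem local_seminorm_equivalence
    (d : ℕ) (hd : 1 ≤ d) (α : ℝ) (hα0 : 0 < α) (hα1 : α < 1) :
    ∃ C : ℝ, 0 < C ∧
      ∀ g : Z d → ℝ, KinReg g Set.univ → kSemi2 α Set.univ g < ⊤ →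
        ∀ z₀ : Z d,
          supAbs (kCyl 1 z₀) g + kSemi2 α (kCyl 1 z₀) g
            ≤ ENNReal.ofReal C *
              (kHolder α (kCyl 2 z₀) (Yop g)
                + (∑ i, ∑ j, kHolder α (kCyl 2 z₀) (pvv g i j))
                + supAbs (kCyl 2 z₀) g) := by
  obtain ⟨C, hC, H⟩ := local_seminorm_equivalence_general α (by linarith) hα1
  exact ⟨C, hC, fun g hg _ => H d g hg⟩
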